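/- arXiv:2407.01744 — 2 statements merged into one kernel-verified Lean document; each statement's English description precedes it below -/
import Mathlib

section
/- Let Z be a set of q ≥ 9 points in linear general position in ℙ⁴. Then no set of 3-dimensional quadric hypersurfaces in a general hyperplane projection situation applies; concretely: the image of Z under projection from a general point of ℙ⁴ to a hyperplane ℙ³ is not contained in two linearly independent quadric surfaces. -/
noncomputable section

/-- The underlying vector space of ℙ⁴ over ℂ. -/
abbrev V5 : Type := Fin 5 → ℂ

/-- ℙ⁴ over ℂ. -/
abbrev P4 : Type := Projectivization ℂ V5

/-- A family of points of ℙ⁴ is in linear general position (LGP) if the representatives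
of any at most 5 of them are linearly independent (no 3 collinear, no 4 coplanar, no 5
in a hyperplane). -/
def LGP {q : ℕ} (P : Fin q → P4) : Prop :=
  ∀ s : Finset (Fin q), s.card ≤ 5 →
    LinearIndependent ℂ (fun i : {x : Fin q // x ∈ s} => (P i.1).rep)

/-- The homogeneous polynomial `f` vanishes at all the points `P i`. -/
def VanishesOnPts {q : ℕ} (f : MvPolynomial (Fin 5) ℂ) (P : Fin q → P4) : Prop :=
  ∀ i, MvPolynomial.eval (P i).rep f = 0

/-- The hypersurface defined by `f` is a cone with vertex at (the point represented by)
`v`, i.e. `f` and all its partial derivatives vanish at `v`; for a quadric this says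
that the corresponding quadric in ℙ⁴ is singular at that point.  Projecting such a cone
from its vertex gives a quadric surface in ℙ³ containing the projected points. -/
def ConeWithVertex (f : MvPolynomial (Fin 5) ℂ) (v : V5) : Prop :=
  MvPolynomial.eval v f = 0 ∧ ∀ j, MvPolynomial.eval v (MvPolynomial.pderiv j f) = 0

/-! Choose `x` as the intersection point of the planes spanned by `z 0, z 1, z 2` and by
`z 3, z 4, z 5`. A quadric cone with vertex `x` through these six points contains both planes, so it
is given by a bilinear pairing between them; as `x` pairs to zero with everything, this is a pairing
of two-dimensional spaces. The three points `z 6, z 7, z 8` and one suitable further point `y`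
impose four independent conditions on it, so no cone with vertex `x` passes through `z 0, …, z 8`
and `y`. The absence of such cones is an open condition on `x`, given by the maximal minors of a
matrix of forms, so it holds for general `x`; but any pencil of cones through the `z i` contains a
member which also passes through `y`. -/

section LinearAlgebra

open Module Submodule

variable {ι K V : Type*} [Field K] [AddCommGroup V] [Module K V]

/-- A family of vectors is in linear general position if any subfamily of at most `dim V` of them
is linearly independent. -/
def InLinearGeneralPosition (K : Type*) {ι V : Type*} [Field K] [AddCommGroup V] [Module K V]
    (z : ι → V) : Prop :=
  ∀ s : Finset ι, s.card ≤ finrank K V → LinearIndepOn K z s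

namespace InLinearGeneralPosition

variable {z : ι → V} {s t : Finset ι}

theorem comp_injective {κ : Type*} (hz : InLinearGeneralPosition K z) {f : κ → ι}
    (hf : Function.Injective f) : InLinearGeneralPosition K (z ∘ f) := fun s hs ↦ by
  have h := hz (s.map ⟨f, hf⟩) (by rwa [Finset.card_map])
  rw [Finset.coe_map] at h
  exact h.comp_of_image hf.injOn

theorem finrank_span_image (hz : InLinearGeneralPosition K z) (hs : s.card ≤ finrank K V) :
    finrank K (span K (z '' s)) = s.card := by
  rw [Set.image_eq_range]
  simpa using finrank_span_eq_card (hz s hs)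

theorem disjoint_span_image (hz : InLinearGeneralPosition K z) (hst : Disjoint s t)
    (hcard : s.card + t.card ≤ finrank K V) :
    Disjoint (span K (z '' s)) (span K (z '' t)) := by
  classical
  have h := hz (s ∪ t) (by rwa [Finset.card_union_of_disjoint hst])
  rw [Finset.coe_union, linearIndepOn_union_iff (by exact_mod_cast hst)] at h
  exact h.2.2

variable [FiniteDimensional K V]

theorem span_image_sup_span_image (hz : InLinearGeneralPosition K z) (hst : Disjoint s t)
    (hcard : finrank K V ≤ s.card + t.card) :
    span K (z '' s) ⊔ span K (z '' t) = ⊤ := by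
  classical
  rw [← Finset.card_union_of_disjoint hst] at hcard
  obtain ⟨u, hu, hucard⟩ := Finset.exists_subset_card_eq hcard
  have hutop : span K (z '' u) = ⊤ :=
    eq_top_of_finrank_eq (by rw [hz.finrank_span_image hucard.le, hucard])
  rw [← span_union, ← Set.image_union, ← Finset.coe_union, eq_top_iff, ← hutop]
  exact span_mono (Set.image_mono (by exact_mod_cast hu))

theorem finrank_span_image_inf_span_image (hz : InLinearGeneralPosition K z) (hst : Disjoint s t)
    (hs : s.card ≤ finrank K V) (ht : t.card ≤ finrank K V)
    (hcard : s.card + t.card = finrank K V + 1) :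
    finrank K ↥(span K (z '' s) ⊓ span K (z '' t)) = 1 := by
  have h := finrank_sup_add_finrank_inf_eq (span K (z '' s)) (span K (z '' t))
  rw [hz.span_image_sup_span_image hst (by lia), finrank_top, hz.finrank_span_image hs,
    hz.finrank_span_image ht] at h
  lia

end InLinearGeneralPosition

theorem le_span_triple_of_sup_eq_top {A A' : Submodule K V} {x p₁ p₂ p₁' p₂' : V}
    (hx : A ⊓ A' ≤ span K {x}) (hp₁ : p₁ ∈ A) (hp₂ : p₂ ∈ A) (hp₁' : p₁' ∈ A') (hp₂' : p₂' ∈ A')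
    (htop : span K {p₁ + p₁', p₂ + p₂'} ⊔ A' = ⊤) : A ≤ span K {x, p₁, p₂} := by
  intro a ha
  obtain ⟨b, hb, a', ha', hab⟩ := mem_sup.1 (htop ▸ mem_top : a ∈ _ ⊔ A')
  obtain ⟨c, d, rfl⟩ := mem_span_pair.1 hb
  have hmem : a - (c • p₁ + d • p₂) ∈ A ⊓ A' := by
    refine ⟨sub_mem ha (add_mem (A.smul_mem c hp₁) (A.smul_mem d hp₂)), ?_⟩
    have : a - (c • p₁ + d • p₂) = c • p₁' + d • p₂' + a' := by rw [← hab]; module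
    rw [this]
    exact add_mem (add_mem (A'.smul_mem c hp₁') (A'.smul_mem d hp₂')) ha'
  obtain ⟨e, he⟩ := mem_span_singleton.1 (hx hmem)
  exact mem_span_triple.2 ⟨e, c, d, by rw [add_assoc, he, sub_add_cancel]⟩

theorem bilin_eq_zero_of_three_pairs {M N P : Type*} [AddCommGroup M] [Module K M]
    [AddCommGroup N] [Module K N] [AddCommGroup P] [Module K P] {B : M →ₗ[K] N →ₗ[K] P}
    {A : Submodule K M} {A' : Submodule K N} {x : M} {x' : N} {p : Fin 3 → M} {p' : Fin 3 → N}
    (hx : B x = 0) (hx' : ∀ m, B m x' = 0) (hp : ∀ i, p i ∈ A) (hp' : ∀ i, p' i ∈ A')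
    (hA : ∀ i j, i ≠ j → A ≤ span K {x, p i, p j})
    (hA' : ∀ i j, i ≠ j → A' ≤ span K {x', p' i, p' j})
    (hdiag : ∀ i, B (p i) (p' i) = 0) (h01 : B (p 0) (p' 1) = 0) :
    ∀ a ∈ A, ∀ a' ∈ A', B a a' = 0 := by
  have eq_zero_on_right {m : M} {i j : Fin 3} (hij : i ≠ j) (hi : B m (p' i) = 0)
      (hj : B m (p' j) = 0) : ∀ a' ∈ A', B m a' = 0 := fun a' ha' ↦ by
    obtain ⟨c, d, e, rfl⟩ := mem_span_triple.1 (hA' i j hij ha')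
    simp [hx', hi, hj]
  have h0 := eq_zero_on_right (by decide) (hdiag 0) h01
  have h12 : B (p 1) (p' 2) = 0 := by
    obtain ⟨c, d, e, h⟩ := mem_span_triple.1 (hA 0 2 (by decide) (hp 1))
    simp [← h, hx, h0 _ (hp' 2), hdiag 2]
  have h1 := eq_zero_on_right (by decide) (hdiag 1) h12
  intro a ha a' ha'
  obtain ⟨c, d, e, rfl⟩ := mem_span_triple.1 (hA 0 1 (by decide) ha)
  simp [hx, h0 a' ha', h1 a' ha']

variable {Q : QuadraticForm K V} {u v w x : V}

theorem polar_eq_zero_of_mem_radical (hx : x ∈ Q.radical) : QuadraticMap.polar Q x v = 0 := by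
  obtain ⟨hQx, hadd⟩ := QuadraticMap.mem_radical_iff'.1 hx
  simp [QuadraticMap.polar, hQx, hadd]

theorem polar_eq_zero_of_linearCombination_mem_radical (hx : x ∈ Q.radical) (hu : Q u = 0)
    (hv : Q v = 0) (hw : Q w = 0) {a b c : K} (hsum : a • u + b • v + c • w = x) (ha : a ≠ 0)
    (hb : b ≠ 0) : QuadraticMap.polar Q u v = 0 := by
  -- The line through `u` and `v` meets the line through `w` and `x`, on which `Q` vanishes.
  have h : Q (a • u + b • v) = 0 := by
    rw [eq_sub_of_add_eq hsum, sub_eq_add_neg, (QuadraticMap.mem_radical_iff'.1 hx).2]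
    simp [QuadraticMap.map_smul, hw]
  simpa [QuadraticMap.map_add, QuadraticMap.map_smul, hu, hv, ha, hb] using h

theorem eq_zero_on_span_triple_of_mem_radical (hx : x ∈ Q.radical) (hu : Q u = 0) (hv : Q v = 0)
    (hw : Q w = 0) (hxs : x ∈ span K {u, v, w}) (huv : x ∉ span K {u, v}) (huw : x ∉ span K {u, w})
    (hvw : x ∉ span K {v, w}) : ∀ y ∈ span K {u, v, w}, Q y = 0 := by
  obtain ⟨a, b, c, rfl⟩ := mem_span_triple.1 hxs
  have ha : a ≠ 0 := by
    rintro rfl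
    exact hvw (mem_span_pair.2 ⟨b, c, by simp⟩)
  have hb : b ≠ 0 := by
    rintro rfl
    exact huw (mem_span_pair.2 ⟨a, c, by simp⟩)
  have hc : c ≠ 0 := by
    rintro rfl
    exact huv (mem_span_pair.2 ⟨a, b, by simp⟩)
  have huv' := polar_eq_zero_of_linearCombination_mem_radical hx hu hv hw rfl ha hb
  have huw' := polar_eq_zero_of_linearCombination_mem_radical hx hu hw hv
    (add_right_comm _ _ _) ha hc
  have hvw' := polar_eq_zero_of_linearCombination_mem_radical hx hv hw hu (by module) hb hc
  intro y hy
  obtain ⟨d, e, f, rfl⟩ := mem_span_triple.1 hy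
  simp [QuadraticMap.map_add, QuadraticMap.map_smul, QuadraticMap.polar_add_left, hu, hv, hw, huv',
    huw', hvw']

namespace InLinearGeneralPosition

variable {z : ι → V} {s t : Finset ι}

theorem eq_zero_on_span_image_of_mem_radical (hz : InLinearGeneralPosition K z)
    (hst : Disjoint s t) (hs : s.card = 3) (ht : t.card + 2 ≤ finrank K V)
    (hxs : x ∈ span K (z '' s)) (hxt : x ∈ span K (z '' t)) (hx₀ : x ≠ 0)
    (hx : x ∈ Q.radical) (hQ : ∀ i ∈ s, Q (z i) = 0) : ∀ y ∈ span K (z '' s), Q y = 0 := by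
  classical
  have hnotMem (i j : ι) (hi : i ∈ s) (hj : j ∈ s) : x ∉ span K {z i, z j} := fun hij ↦ by
    have hdisj : Disjoint ({i, j} : Finset ι) t :=
      hst.mono_left (by simp [Finset.insert_subset_iff, hi, hj])
    have hcard : ({i, j} : Finset ι).card + t.card ≤ finrank K V := by
      have := Finset.card_le_two (a := i) (b := j)
      lia
    refine hx₀ (disjoint_def.1 (hz.disjoint_span_image hdisj hcard) x ?_ hxt)
    simpa [Set.image_pair] using hij
  obtain ⟨i, j, k, -, -, -, rfl⟩ := Finset.card_eq_three.1 hs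
  simp only [Finset.coe_insert, Finset.coe_singleton, Set.image_insert_eq,
    Set.image_singleton] at hxs ⊢
  exact eq_zero_on_span_triple_of_mem_radical hx (hQ i (by simp)) (hQ j (by simp))
    (hQ k (by simp)) hxs
    (hnotMem i j (by simp) (by simp)) (hnotMem i k (by simp) (by simp))
    (hnotMem j k (by simp) (by simp))

theorem exists_mem_span_triple_decomposition (hz : InLinearGeneralPosition K z)
    (hV : finrank K V = 5) (hst : Disjoint s t) (hs : s.card = 3) (ht : t.card = 3)
    {r : Fin 3 → ι} (hr : Function.Injective r) (hrs : ∀ i, r i ∉ s) (hrt : ∀ i, r i ∉ t)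
    (hx : span K (z '' s) ⊓ span K (z '' t) ≤ span K {x}) :
    ∃ p p' : Fin 3 → V, (∀ i, p i ∈ span K (z '' s)) ∧ (∀ i, p' i ∈ span K (z '' t)) ∧
      (∀ i, p i + p' i = z (r i)) ∧
      (∀ i j, i ≠ j → span K (z '' s) ≤ span K {x, p i, p j}) ∧
      ∀ i j, i ≠ j → span K (z '' t) ≤ span K {x, p' i, p' j} := by
  classical
  have : FiniteDimensional K V := .of_finrank_pos (by lia)
  have htop := hz.span_image_sup_span_image hst (by lia)
  have pair_sup {u : Finset ι} (hu : u.card = 3) (hru : ∀ i, r i ∉ u) (i j : Fin 3) (hij : i ≠ j) :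
      span K {z (r i), z (r j)} ⊔ span K (z '' u) = ⊤ := by
    have hdisj : Disjoint {r i, r j} u := by simp [hru]
    simpa [Set.image_pair] using hz.span_image_sup_span_image hdisj
      (by rw [Finset.card_pair (hr.ne hij), hu, hV])
  choose p hp p' hp' hadd using fun i ↦ mem_sup.1 (htop ▸ mem_top : z (r i) ∈ _ ⊔ _)
  refine ⟨p, p', hp, hp', hadd, fun i j hij ↦ ?_, fun i j hij ↦ ?_⟩
  · refine le_span_triple_of_sup_eq_top hx (hp i) (hp j) (hp' i) (hp' j) ?_
    rw [hadd, hadd, pair_sup ht hrt i j hij]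
  · refine le_span_triple_of_sup_eq_top (inf_comm _ _ |>.trans_le hx) (hp' i) (hp' j)
      (hp i) (hp j) ?_
    rw [add_comm, hadd, add_comm, hadd, pair_sup hs hrs i j hij]

theorem exists_forall_quadraticForm_eq_zero {z : Fin 9 → V} (hz : InLinearGeneralPosition K z)
    (hV : finrank K V = 5) :
    ∃ x y : V, ∀ Q : QuadraticForm K V,
      x ∈ Q.radical → (∀ i, Q (z i) = 0) → Q y = 0 → Q = 0 := by
  have : FiniteDimensional K V := .of_finrank_pos (by lia)
  let s : Finset (Fin 9) := {0, 1, 2}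
  let t : Finset (Fin 9) := {3, 4, 5}
  have hst : Disjoint s t := by decide
  obtain ⟨⟨x, hxs, hxt⟩, hx₀, hx⟩ := finrank_eq_one_iff'.1 <|
    hz.finrank_span_image_inf_span_image hst (by simp [s, hV]) (by simp [t, hV])
      (by simp [s, t, hV])
  have hinf : span K (z '' s) ⊓ span K (z '' t) ≤ span K {x} := fun v hv ↦ by
    obtain ⟨c, hc⟩ := hx ⟨v, hv⟩
    exact mem_span_singleton.2 ⟨c, congrArg Subtype.val hc⟩
  replace hx₀ : x ≠ 0 := fun h ↦ hx₀ (Subtype.ext h)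
  obtain ⟨p, p', hp, hp', hadd, hps, hpt⟩ := hz.exists_mem_span_triple_decomposition hV hst rfl rfl
    (r := ![6, 7, 8]) (by decide) (by decide) (by decide) hinf
  refine ⟨x, p 0 + p' 1, fun Q hxQ hQz hQy ↦ ?_⟩
  have hQs := hz.eq_zero_on_span_image_of_mem_radical hst rfl (by simp [t, hV]) hxs hxt hx₀
    hxQ fun i _ ↦ hQz i
  have hQt := hz.eq_zero_on_span_image_of_mem_radical hst.symm rfl (by simp [s, hV]) hxt
    hxs hx₀ hxQ fun i _ ↦ hQz i
  have apply_add {a a' : V} (ha : a ∈ span K (z '' s)) (ha' : a' ∈ span K (z '' t)) :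
      Q (a + a') = Q.polarBilin a a' := by
    rw [QuadraticMap.map_add Q, hQs a ha, hQt a' ha', zero_add, zero_add,
      QuadraticMap.polarBilin_apply_apply]
  have hpolar := bilin_eq_zero_of_three_pairs (B := Q.polarBilin) hxQ.2
    (fun v ↦ by
      rw [QuadraticMap.polarBilin_apply_apply, QuadraticMap.polar_comm,
        polar_eq_zero_of_mem_radical hxQ])
    hp hp' hps hpt (fun i ↦ by rw [← apply_add (hp i) (hp' i), hadd, hQz])
    (by rw [← apply_add (hp 0) (hp' 1), hQy])
  ext v
  obtain ⟨a, ha, a', ha', rfl⟩ := mem_sup.1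
    (hz.span_image_sup_span_image hst (by simp [s, t, hV]) ▸ mem_top : v ∈ _ ⊔ _)
  rw [apply_add ha ha', hpolar a ha a' ha', zero_apply]

end InLinearGeneralPosition

end LinearAlgebra

section Polynomials

open MvPolynomial Module

variable {K σ : Type*} [Field K]

/-- `p` holds at a general vector: on the nonvanishing locus of a homogeneous polynomial, which is
nonempty as a set of `K`-points even if `K` is finite. -/
def HoldsGenerically (p : (σ → K) → Prop) : Prop :=
  ∃ F : MvPolynomial σ K, (∃ n, F.IsHomogeneous n) ∧ (∃ x, eval x F ≠ 0) ∧
    ∀ x, eval x F ≠ 0 → p x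

theorem HoldsGenerically.mono {p q : (σ → K) → Prop} (hp : HoldsGenerically p)
    (hpq : ∀ x, p x → q x) : HoldsGenerically q := by
  obtain ⟨F, hhom, hne, hF⟩ := hp
  exact ⟨F, hhom, hne, fun x hx ↦ hpq x (hF x hx)⟩

theorem isHomogeneous_det {R n : Type*} [CommRing R] [Fintype n] [DecidableEq n]
    {M : Matrix n n (MvPolynomial σ R)} {d : n → ℕ} (hM : ∀ i j, (M i j).IsHomogeneous (d j)) :
    M.det.IsHomogeneous (∑ j, d j) := by
  rw [Matrix.det_apply]
  refine IsHomogeneous.sum _ _ _ fun π _ ↦ ?_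
  have hprod := IsHomogeneous.prod Finset.univ (fun i ↦ M (π i) i) d fun i _ ↦ hM (π i) i
  exact ((homogeneousSubmodule σ R _).toAddSubgroup.zsmul_mem hprod (π.sign : ℤ) :)

theorem exists_isUnit_submatrix_of_linearIndependent_row {m n : Type*} [Fintype m]
    [DecidableEq m] [Finite n] {A : Matrix m n K} (hA : LinearIndependent K A.row) :
    ∃ c : m → n, IsUnit (A.submatrix id c) := by
  have := Fintype.ofFinite n
  have hspan : Submodule.span K (Set.range A.col) = ⊤ :=
    Submodule.eq_top_of_finrank_eq (by
      rw [← Matrix.rank_eq_finrank_span_cols, hA.rank_matrix, finrank_fintype_fun_eq_card])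
  obtain ⟨κ, c, -, hc, hli⟩ := exists_linearIndependent' K A.col
  let b : Basis κ K (m → K) := .mk hli (by rw [hc, hspan])
  let e : m ≃ κ := (Pi.basisFun K m).indexEquiv b
  exact ⟨c ∘ e, Matrix.linearIndependent_cols_iff_isUnit.1 (hli.comp e e.injective)⟩

variable {ι κ : Type*} [Finite ι] [Finite κ]

theorem holdsGenerically_linearIndependent {f : ι → κ → MvPolynomial σ K} {d : κ → ℕ}
    (hf : ∀ i k, (f i k).IsHomogeneous (d k)) {x₀ : σ → K}
    (hx₀ : LinearIndependent K fun i k ↦ eval x₀ (f i k)) :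
    HoldsGenerically fun x ↦ LinearIndependent K fun i k ↦ eval x (f i k) := by
  classical
  have := Fintype.ofFinite ι
  obtain ⟨c, hc⟩ := exists_isUnit_submatrix_of_linearIndependent_row
    (A := .of fun i k ↦ eval x₀ (f i k)) hx₀
  let M : Matrix ι ι (MvPolynomial σ K) := .of fun i j ↦ f i (c j)
  have eval_det (x : σ → K) : eval x M.det = (M.map (eval x)).det := RingHom.map_det _ _
  refine ⟨M.det, ⟨_, isHomogeneous_det fun i j ↦ hf i (c j)⟩, ⟨x₀, ?_⟩, fun x hx ↦ ?_⟩
  · rw [eval_det]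
    exact ((Matrix.isUnit_iff_isUnit_det _).1 hc).ne_zero
  · have hrow : LinearIndependent K (M.map (eval x)).row :=
      Matrix.linearIndependent_rows_iff_isUnit.2
        ((Matrix.isUnit_iff_isUnit_det _).2 (eval_det x ▸ hx).isUnit)
    exact .of_comp (LinearMap.funLeft K K c) hrow

/-- All partial derivatives of `f`, and `f` itself, vanish at `x`; for a quadric this says that it
is a cone with vertex `x`. -/
def IsSingularAt {R : Type*} [CommSemiring R] (f : MvPolynomial σ R) (x : σ → R) : Prop :=
  eval x f = 0 ∧ ∀ j, eval x (pderiv j f) = 0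

/-- The value and the first partial derivatives of a polynomial at `x`, the value being the
coordinate `none`. -/
def jet {R : Type*} [CommSemiring R] (x : σ → R) : MvPolynomial σ R →ₗ[R] Option σ → R :=
  LinearMap.pi fun k ↦ (aeval x).toLinearMap ∘ₗ k.elim LinearMap.id fun j ↦ (pderiv j).toLinearMap

theorem jet_eq_zero_iff {R : Type*} [CommSemiring R] {x : σ → R} {f : MvPolynomial σ R} :
    jet x f = 0 ↔ IsSingularAt f x := by
  simp [funext_iff, Option.forall, jet, IsSingularAt, aeval_eq_eval]

theorem linearIndependent_comp_basis_iff_ker_eq_bot {R M N ι : Type*} [Ring R] [AddCommGroup M]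
    [Module R M] [AddCommGroup N] [Module R N] (b : Basis ι R M) {f : M →ₗ[R] N} :
    LinearIndependent R (f ∘ b) ↔ LinearMap.ker f = ⊥ :=
  ⟨fun h ↦ LinearMap.ker_eq_bot.2 (LinearMap.injective_of_linearIndependent b.span_eq h),
    b.linearIndependent.map' f⟩

theorem holdsGenerically_forall_isSingularAt_imp_eq_zero [Finite σ]
    {W : Submodule K (MvPolynomial σ K)} {d : ℕ} (hW : W ≤ homogeneousSubmodule σ K d) {x₀ : σ → K}
    (hx₀ : ∀ f ∈ W, IsSingularAt f x₀ → f = 0) :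
    HoldsGenerically fun x ↦ ∀ f ∈ W, IsSingularAt f x → f = 0 := by
  have : FiniteDimensional K (homogeneousSubmodule σ K d) :=
    Module.Finite.iff_fg.2 (homogeneousSubmodule_fg σ K d)
  have : FiniteDimensional K W := Submodule.finiteDimensional_of_le hW
  let b := finBasis K W
  have linearIndependent_jet (x : σ → K) :
      LinearIndependent K (fun i ↦ jet x (b i)) ↔ ∀ f ∈ W, IsSingularAt f x → f = 0 := by
    refine (linearIndependent_comp_basis_iff_ker_eq_bot b (f := jet x ∘ₗ W.subtype)).trans ?_
    rw [LinearMap.ker_eq_bot']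
    simp [jet_eq_zero_iff]
  let p (i : Fin (finrank K W)) (k : Option σ) : MvPolynomial σ K :=
    k.elim (b i : MvPolynomial σ K) fun j ↦ pderiv j (b i : MvPolynomial σ K)
  have hp i k : (p i k).IsHomogeneous (k.elim d fun _ ↦ d - 1) := by
    have hb : (b i : MvPolynomial σ K).IsHomogeneous d := hW (b i).2
    cases k with
    | none => exact hb
    | some j => exact hb.pderiv
  have eval_p (x : σ → K) : (fun i k ↦ eval x (p i k)) = fun i ↦ jet x (b i) := by
    ext i k
    cases k <;> simp [p, jet, aeval_eq_eval]
  refine (holdsGenerically_linearIndependent hp (x₀ := x₀) ?_).mono fun x hx ↦ ?_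
  · rwa [eval_p, linearIndependent_jet]
  · rwa [eval_p, linearIndependent_jet] at hx

open scoped Pointwise in
theorem exists_quadraticForm_of_isHomogeneous_two {R : Type*} [CommRing R] [Fintype σ]
    {f : MvPolynomial σ R} (hf : f.IsHomogeneous 2) :
    ∃ Q : QuadraticForm R (σ → R), (∀ v, Q v = eval v f) ∧
      ∀ v w, QuadraticMap.polar Q v w = ∑ j, w j * eval v (pderiv j f) := by
  classical
  have hspan : f ∈ Submodule.span R (Set.range (X : σ → MvPolynomial σ R) * Set.range X) := by
    rwa [← Submodule.span_mul_span, ← homogeneousSubmodule_one_eq_span_X, ← pow_two,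
      homogeneousSubmodule_one_pow]
  clear hf
  induction hspan using Submodule.span_induction with
  | mem f hf =>
    obtain ⟨_, ⟨i, rfl⟩, _, ⟨j, rfl⟩, rfl⟩ := hf
    refine ⟨.proj i j, by simp, fun v w ↦ ?_⟩
    have hsum : ∑ k, w k * eval v (pderiv k (X i * X j)) = w j * v i + w i * v j := by
      simp [pderiv_X, Pi.single_apply, apply_ite (eval v), mul_add, Finset.sum_add_distrib]
    rw [hsum]
    simp only [QuadraticMap.polar, QuadraticMap.proj_apply, Pi.add_apply]
    ring
  | zero => exact ⟨0, by simp, by simp [QuadraticMap.polar]⟩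
  | add f g _ _ hf hg =>
    obtain ⟨Q, hQ, hQpolar⟩ := hf
    obtain ⟨Q', hQ', hQ'polar⟩ := hg
    refine ⟨Q + Q', by simp [hQ, hQ'], fun v w ↦ ?_⟩
    simp [QuadraticMap.polar_add, hQpolar, hQ'polar, mul_add, Finset.sum_add_distrib]
  | smul c f _ hf =>
    obtain ⟨Q, hQ, hQpolar⟩ := hf
    refine ⟨c • Q, by simp [hQ], fun v w ↦ ?_⟩
    simp [QuadraticMap.polar_smul, hQpolar, Finset.mul_sum, mul_left_comm]

theorem exists_quadraticForm_mem_radical_of_isHomogeneous_two {R : Type*} [CommRing R]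
    [Finite σ] {f : MvPolynomial σ R} (hf : f.IsHomogeneous 2) :
    ∃ Q : QuadraticForm R (σ → R), (∀ v, Q v = eval v f) ∧
      ∀ x, IsSingularAt f x → x ∈ Q.radical := by
  have := Fintype.ofFinite σ
  obtain ⟨Q, hQ, hQpolar⟩ := exists_quadraticForm_of_isHomogeneous_two hf
  refine ⟨Q, hQ, fun x hx ↦ ⟨(hQ x).trans hx.1, LinearMap.ext fun w ↦ ?_⟩⟩
  simp [hQpolar, hx.2]

/-- The space of quadratic forms, as homogeneous polynomials, which vanish on `Z`. -/
def quadricsThrough (Z : Set (σ → K)) : Submodule K (MvPolynomial σ K) :=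
  homogeneousSubmodule σ K 2 ⊓ (vanishingIdeal K Z).restrictScalars K

theorem mem_quadricsThrough {Z : Set (σ → K)} {f : MvPolynomial σ K} :
    f ∈ quadricsThrough Z ↔ f.IsHomogeneous 2 ∧ ∀ v ∈ Z, eval v f = 0 :=
  Iff.rfl

theorem exists_holdsGenerically_quadricsThrough_insert {z : Fin 9 → Fin 5 → K}
    (hz : InLinearGeneralPosition K z) :
    ∃ y, HoldsGenerically fun x ↦
      ∀ f ∈ quadricsThrough (insert y (Set.range z)), IsSingularAt f x → f = 0 := by
  obtain ⟨x₀, y, hxy⟩ := hz.exists_forall_quadraticForm_eq_zero (by simp)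
  refine ⟨y, holdsGenerically_forall_isSingularAt_imp_eq_zero (d := 2) inf_le_left (x₀ := x₀)
    fun f hf hx₀ ↦ ?_⟩
  obtain ⟨hhom, hvanish⟩ := mem_quadricsThrough.1 hf
  obtain ⟨Q, hQ, hrad⟩ := exists_quadraticForm_mem_radical_of_isHomogeneous_two hhom
  have hQ₀ : Q = 0 := hxy Q (hrad x₀ hx₀) (fun i ↦ (hQ _).trans (hvanish _ (by simp)))
    ((hQ y).trans (hvanish y (by simp)))
  refine hhom.eq_zero_of_forall_eval_eq_zero_of_le_card (fun v ↦ ?_) ?_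
  · rw [← hQ, hQ₀, zero_apply]
  · exact_mod_cast Cardinal.two_le_iff.2 ⟨0, 1, zero_ne_one (α := K)⟩

theorem stmt_7_general {q : ℕ} (hq : 9 ≤ q) {z : Fin q → Fin 5 → K}
    (hz : InLinearGeneralPosition K z) :
    HoldsGenerically fun x ↦ ¬ ∃ q₁ q₂ : MvPolynomial (Fin 5) K,
      LinearIndependent K ![q₁, q₂] ∧ q₁.IsHomogeneous 2 ∧ q₂.IsHomogeneous 2 ∧
        (∀ i, eval (z i) q₁ = 0) ∧ (∀ i, eval (z i) q₂ = 0) ∧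
          IsSingularAt q₁ x ∧ IsSingularAt q₂ x := by
  obtain ⟨y, hy⟩ := exists_holdsGenerically_quadricsThrough_insert
    (hz.comp_injective (Fin.castLE_injective hq))
  refine hy.mono ?_
  rintro x hx ⟨q₁, q₂, hli, hhom₁, hhom₂, hz₁, hz₂, hsing₁, hsing₂⟩
  have hdisj : Disjoint (Submodule.span K (Set.range ![q₁, q₂]))
      (LinearMap.ker (aeval y).toLinearMap) := by
    refine Submodule.disjoint_def.2 fun f hf hfy ↦ ?_
    rw [Matrix.range_cons_cons_empty] at hf
    obtain ⟨a, b, rfl⟩ := Submodule.mem_span_pair.1 hf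
    refine hx _ (mem_quadricsThrough.2 ⟨?_, ?_⟩) ?_
    · let H := homogeneousSubmodule (Fin 5) K 2
      exact H.add_mem (H.smul_mem a hhom₁) (H.smul_mem b hhom₂)
    · rintro _ (rfl | ⟨i, rfl⟩)
      · exact hfy
      · simp [hz₁, hz₂]
    · simp [IsSingularAt, hsing₁.1, hsing₁.2, hsing₂.1, hsing₂.2]
  simpa using (hli.map hdisj).fintype_card_le_finrank

end Polynomials

/-- Let `Z` be a set of `q ≥ 9` points in linear general position in ℙ⁴.  Then for a
general point `P` of ℙ⁴ (i.e. all `P` in a nonempty Zariski-open set), the image of `Z`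
under the projection from `P` to a hyperplane ℙ³ is not contained in two linearly
independent quadric surfaces; equivalently there do not exist two linearly independent
quadric cones with vertex `P` containing `Z`. -/
theorem stmt_7 (q : ℕ) (hq : 9 ≤ q) (P : Fin q → P4)
    (hinj : Function.Injective P) (hLGP : LGP P) :
    ∃ F : MvPolynomial (Fin 5) ℂ, F ≠ 0 ∧ (∃ n, F.IsHomogeneous n) ∧
      ∀ x : P4, MvPolynomial.eval x.rep F ≠ 0 →
        ¬ ∃ q₁ q₂ : MvPolynomial (Fin 5) ℂ,
            LinearIndependent ℂ ![q₁, q₂] ∧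
            q₁.IsHomogeneous 2 ∧ q₂.IsHomogeneous 2 ∧
            VanishesOnPts q₁ P ∧ VanishesOnPts q₂ P ∧
            ConeWithVertex q₁ x.rep ∧ ConeWithVertex q₂ x.rep := by
  obtain ⟨F, hhom, ⟨x₀, hx₀⟩, hF⟩ := stmt_7_general hq (z := fun i ↦ (P i).rep)
    fun s hs ↦ hLGP s (by simpa using hs)
  exact ⟨F, by rintro rfl; simp at hx₀, hhom, fun x ↦ hF x.rep⟩
end
end

section
/- Let Z = {P₁, …, P₇} be a nondegenerate set of 7 points in ℙ⁴ (i.e., Z spans ℙ⁴). Then the image of Z under projection from a general point of ℙ⁴ to a hyperplane is not contained in any twisted cubic curve in ℙ³. -/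
noncomputable section

/-- The underlying vector space of ℙ³ over ℂ. -/
abbrev V4 : Type := Fin 4 → ℂ

/-- The (nonzero) vector `w ∈ ℂ⁴` represents a point of a twisted cubic in ℙ³: there is
a projective linear change of coordinates `A` carrying the standard twisted cubic
`(s³ : s²t : st² : t³)` to a curve through `w`. -/
def OnTwistedCubic (A : V4 ≃ₗ[ℂ] V4) (w : V4) : Prop :=
  ∃ s t c : ℂ, (s ≠ 0 ∨ t ≠ 0) ∧ c ≠ 0 ∧
    w = c • (A ![s ^ 3, s ^ 2 * t, s * t ^ 2, t ^ 3])

/-!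
Let `x` be a general point and suppose that the projection of `Z` from `x` lies on a twisted cubic.
No secant line of `Z` passes through `x`, so the seven points have distinct parameters on the cubic.
Any four points of a twisted cubic are independent, hence so are any four points of `Z`. Projecting
the cubic further from the image of one point `v` of `Z` gives a conic, so some quadric through `Z`
is singular along the line `v x`: that is, `x` lies on the cone over the Weddle surface of the six
points projected from `v`.

It remains to choose `v` so that some `y` is not on this cone. There is a hyperplane `H` spanned by
four points `v, a, b, c` of `Z` and containing no other point of `Z`; let `y` be a combination of
`a, b, c` with nonzero coefficients, not in the hyperplane spanned by `v` and the three remaining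
points. A quadric through `Z` that is singular at `v` and `y` contains `H`, hence is the union of
`H` and a hyperplane through `v`, `y` and the three remaining points, and there is no such
hyperplane.
-/

section Generic

variable {K : Type*} [Field K] {σ ι U W : Type*}
  [AddCommGroup U] [Module K U] [AddCommGroup W] [Module K W]

/-- The property `P` holds for a general point of the projective space of lines in `σ → K`: it
holds away from the zero locus of some nonzero homogeneous polynomial. It is phrased for vectors
`x : σ → K`, as representatives of points. -/
def Generically (P : (σ → K) → Prop) : Prop :=
  ∃ F : MvPolynomial σ K, F ≠ 0 ∧ (∃ n, F.IsHomogeneous n) ∧ ∀ x, MvPolynomial.eval x F ≠ 0 → P x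

theorem Generically.mono {P Q : (σ → K) → Prop} (hP : Generically P) (h : ∀ x, P x → Q x) :
    Generically Q := by
  obtain ⟨F, hF, hhom, hFP⟩ := hP
  exact ⟨F, hF, hhom, fun x hx => h x (hFP x hx)⟩

theorem Generically.and {P Q : (σ → K) → Prop} (hP : Generically P) (hQ : Generically Q) :
    Generically fun x => P x ∧ Q x := by
  obtain ⟨F, hF, ⟨m, hm⟩, hFP⟩ := hP
  obtain ⟨G, hG, ⟨n, hn⟩, hGQ⟩ := hQ
  refine ⟨F * G, mul_ne_zero hF hG, ⟨m + n, hm.mul hn⟩, fun x hx => ?_⟩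
  rw [map_mul, mul_ne_zero_iff] at hx
  exact ⟨hFP x hx.1, hGQ x hx.2⟩

theorem Generically.forall [Finite ι] {P : ι → (σ → K) → Prop} (h : ∀ i, Generically (P i)) :
    Generically fun x => ∀ i, P i x := by
  have := Fintype.ofFinite ι
  choose F hF hhom hFP using h
  choose n hn using hhom
  refine ⟨∏ i, F i, Finset.prod_ne_zero_iff.mpr fun i _ => hF i,
    ⟨_, MvPolynomial.IsHomogeneous.prod _ _ _ fun i _ => hn i⟩, fun x hx i => hFP i x ?_⟩
  rw [map_prod] at hx
  exact Finset.prod_ne_zero_iff.mp hx i (Finset.mem_univ i)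

theorem generically_det_ne_zero [Finite σ] [FiniteDimensional K U]
    (φ : (σ → K) →ₗ[K] Module.End K U) {y : σ → K} (hy : LinearMap.det (φ y) ≠ 0) :
    Generically fun x => LinearMap.det (φ x) ≠ 0 := by
  classical
  have := Fintype.ofFinite σ
  let F := (LinearMap.polyCharpoly φ (Pi.basisFun K σ)).coeff 0
  have hF (x) : MvPolynomial.eval x F = (φ x).charpoly.coeff 0 :=
    LinearMap.polyCharpoly_coeff_eval φ (Pi.basisFun K σ) x 0
  have hdet (x) : LinearMap.det (φ x) ≠ 0 ↔ MvPolynomial.eval x F ≠ 0 := by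
    simp [hF, LinearMap.det_eq_sign_charpoly_coeff]
  refine ⟨F, fun h => (hdet y).mp hy (by rw [h, map_zero]),
    ⟨_, LinearMap.polyCharpoly_coeff_isHomogeneous φ _ 0 _ (zero_add _)⟩, fun x => (hdet x).mpr⟩

theorem generically_injective [Finite σ] [FiniteDimensional K U]
    (φ : (σ → K) →ₗ[K] U →ₗ[K] W) {y : σ → K} (hy : Function.Injective (φ y)) :
    Generically fun x => Function.Injective (φ x) := by
  obtain ⟨g, hg⟩ := (φ y).exists_leftInverse_of_injective (LinearMap.ker_eq_bot.mpr hy)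
  have hdet : LinearMap.det (LinearMap.llcomp K U W U g (φ y)) ≠ 0 := by
    rw [show LinearMap.llcomp K U W U g (φ y) = LinearMap.id from hg, LinearMap.det_id]
    exact one_ne_zero
  refine (generically_det_ne_zero (LinearMap.llcomp K U W U g ∘ₗ φ) hdet).mono fun x hx => ?_
  exact ((LinearMap.equivOfDetNeZero _ hx).injective).of_comp (f := g)

theorem generically_disjoint_ker [Finite σ] [FiniteDimensional K U]
    (φ : (σ → K) →ₗ[K] U →ₗ[K] W) {S : Submodule K U} {y : σ → K}
    (hy : Disjoint S (LinearMap.ker (φ y))) :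
    Generically fun x => Disjoint S (LinearMap.ker (φ x)) := by
  have hφ (x) : Function.Injective ((LinearMap.lcomp K W S.subtype ∘ₗ φ) x) ↔
      Disjoint S (LinearMap.ker (φ x)) := LinearMap.injective_domRestrict_iff
  simpa only [hφ] using generically_injective (LinearMap.lcomp K W S.subtype ∘ₗ φ) ((hφ y).mpr hy)

theorem generically_notMem [Finite σ] {S : Submodule K (σ → K)} (hS : S ≠ ⊤) :
    Generically fun x => x ∉ S := by
  obtain ⟨y, -, hy⟩ := SetLike.exists_of_lt hS.lt_top
  let φ : (σ → K) →ₗ[K] K →ₗ[K] (σ → K) ⧸ S :=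
    (LinearMap.ringLmapEquivSelf K K _).symm.toLinearMap ∘ₗ S.mkQ
  have hφ (x) : Function.Injective (φ x) ↔ x ∉ S := by
    refine ⟨fun h hx => one_ne_zero (h (?_ : φ x 1 = φ x 0)), fun hx => ?_⟩
    · simp [φ, hx]
    · exact smul_left_injective K ((Submodule.Quotient.mk_eq_zero S).not.mpr hx)
  simpa only [hφ] using generically_injective φ ((hφ y).mpr hy)

end Generic

section Hyperplanes

variable {K V ι : Type*} [Field K] [AddCommGroup V] [Module K V]

theorem finrank_span_image_finset {p : ι → V} {s : Finset ι} (hs : LinearIndepOn K p s) :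
    Module.finrank K (Submodule.span K (p '' s)) = s.card := by
  rw [Set.image_eq_range]
  exact (finrank_span_eq_card hs).trans (Fintype.card_coe s)

theorem isCoatom_span_image_finset [FiniteDimensional K V] {p : ι → V} {s : Finset ι}
    (hs : LinearIndepOn K p s) (hcard : s.card + 1 = Module.finrank K V) :
    IsCoatom (Submodule.span K (p '' s)) := by
  rw [← isSimpleModule_iff_isCoatom, isSimpleModule_iff_finrank_eq_one]
  have := (Submodule.span K (p '' s)).finrank_quotient_add_finrank
  rw [finrank_span_image_finset hs] at this
  lia

theorem exists_finset_basis [Finite ι] [FiniteDimensional K V] {p : ι → V}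
    (hspan : Submodule.span K (Set.range p) = ⊤) :
    ∃ b : Finset ι, LinearIndepOn K p b ∧ b.card = Module.finrank K V := by
  obtain ⟨b, -, -, hpb, hb⟩ :=
    exists_linearIndepOn_extension (linearIndepOn_empty K p) (Set.empty_subset Set.univ)
  lift b to Finset ι using Set.toFinite b
  refine ⟨b, hb, ?_⟩
  have htop : Submodule.span K (p '' b) = ⊤ := by
    rw [eq_top_iff, ← hspan, Submodule.span_le, ← Set.image_univ]
    exact hpb
  rw [← finrank_span_image_finset hb, htop, finrank_top]

theorem eq_of_mem_span_image_diff_singleton {p : ι → V} {b : Set ι} {i j : ι} {w : V}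
    (hb : LinearIndepOn K p b) (hi : i ∈ b) (hw : w ∉ Submodule.span K (p '' (b \ {i, j})))
    (hwi : w ∈ Submodule.span K (p '' (b \ {i})))
    (hwj : w ∈ Submodule.span K (p '' (b \ {j}))) : i = j := by
  by_contra hij
  have hdiff : insert i (b \ {i, j}) = b \ {j} := by grind
  rw [← hdiff, Set.image_insert_eq] at hwj
  refine hb.notMem_span hi (Submodule.span_le.mpr ?_ (mem_span_insert_exchange hwj hw))
  exact Set.insert_subset hwi ((Set.image_mono (by grind)).trans Submodule.subset_span)

theorem exists_finset_forall_notMem_span_image [Fintype ι] [FiniteDimensional K V] {p : ι → V}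
    (hcard : Fintype.card ι < 2 * Module.finrank K V)
    (hspan : Submodule.span K (Set.range p) = ⊤)
    (hindep : ∀ s : Finset ι, s.card + 1 = Module.finrank K V → LinearIndepOn K p s) :
    ∃ s : Finset ι, s.card + 1 = Module.finrank K V ∧
      ∀ i ∉ s, p i ∉ Submodule.span K (p '' s) := by
  classical
  -- Any point outside the basis `b` lies on at most one of the facets of `b`, and there are fewer
  -- such points than facets.
  obtain ⟨b, hb, hbcard⟩ := exists_finset_basis hspan
  let bad (w : ι) : Finset ι := {i ∈ b | p w ∈ Submodule.span K (p '' (b \ {i}))}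
  have hbad : ∀ w ∈ bᶜ, (bad w).card ≤ 1 := by
    intro w hw
    rw [Finset.mem_compl] at hw
    simp only [Finset.card_le_one, bad, Finset.mem_filter]
    rintro i ⟨hi, hwi⟩ j ⟨hj, hwj⟩
    by_contra hij
    have hs : LinearIndepOn K p (insert w (b \ {i, j}) : Finset ι) := hindep _ (by grind)
    rw [Finset.coe_insert] at hs
    have hwspan := hs.notMem_span_of_insert (by grind)
    exact hij (eq_of_mem_span_image_diff_singleton hb hi (by simpa using hwspan) hwi hwj)
  obtain ⟨i, hi, hgood⟩ : ∃ i ∈ b, i ∉ bᶜ.biUnion bad := by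
    apply Finset.exists_mem_notMem_of_card_lt_card
    have := Finset.card_biUnion_le_card_mul bᶜ bad 1 hbad
    have := b.card_add_card_compl
    lia
  refine ⟨b.erase i, by rw [Finset.card_erase_add_one hi, hbcard], fun w hw => ?_⟩
  rw [Finset.coe_erase]
  by_cases hwb : w ∈ b
  · obtain rfl : w = i := by simpa [hwb] using hw
    exact hb.notMem_span hi
  · exact fun hmem => hgood (Finset.mem_biUnion.mpr
      ⟨w, Finset.mem_compl.mpr hwb, Finset.mem_filter.mpr ⟨hi, hmem⟩⟩)

end Hyperplanes

section Isotropic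

variable {K V ι : Type*} [Field K] [AddCommGroup V] [Module K V] {B : LinearMap.BilinForm K V}

theorem apply_eq_zero_of_mem_span {S : Set V} (hS : ∀ x ∈ S, ∀ y ∈ S, B x y = 0) {x y : V}
    (hx : x ∈ Submodule.span K S) (hy : y ∈ Submodule.span K S) : B x y = 0 :=
  (Submodule.mem_bot K).mp
    (LinearMap.BilinMap.apply_apply_mem_of_mem_span ⊥ S S B (by simpa using hS) x y hx hy)

theorem apply_eq_zero_of_apply_sum_smul_eq_zero (h2 : (2 : K) ≠ 0) (hB : B.IsSymm) {p : ι → V}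
    {t : Finset ι} (ht : t.card = 3) (hp : ∀ i ∈ t, B (p i) (p i) = 0) {α : ι → K}
    (hα : ∀ i, α i ≠ 0) (hker : B (∑ i ∈ t, α i • p i) = 0) :
    ∀ i ∈ t, ∀ j ∈ t, B (p i) (p j) = 0 := by
  classical
  obtain ⟨a, b, c, hab, hac, hbc, rfl⟩ := Finset.card_eq_three.mp ht
  simp only [Finset.mem_insert, Finset.mem_singleton, forall_eq_or_imp, forall_eq] at hp ⊢
  obtain ⟨ha, hb, hc⟩ := hp
  have hsum (x) : α a * B (p a) x + (α b * B (p b) x + α c * B (p c) x) = 0 := by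
    simpa [hab, hac, hbc] using LinearMap.congr_fun hker x
  have hba : B (p b) (p a) = B (p a) (p b) := hB.eq _ _
  have hca : B (p c) (p a) = B (p a) (p c) := hB.eq _ _
  have hcb : B (p c) (p b) = B (p b) (p c) := hB.eq _ _
  have hA := hsum (p a)
  have hB' := hsum (p b)
  have hC := hsum (p c)
  rw [ha, hba, hca] at hA
  rw [hb, hcb] at hB'
  rw [hc] at hC
  have hab0 : B (p a) (p b) = 0 := by
    have : 2 * α a * α b * B (p a) (p b) = 0 := by
      linear_combination α a * hA + α b * hB' - α c * hC
    simpa [h2, hα] using this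
  have hac0 : B (p a) (p c) = 0 := by simpa [hab0, hα] using hA
  have hbc0 : B (p b) (p c) = 0 := by simpa [hab0, hα] using hB'
  simp only [*, and_self]

theorem apply_eq_zero_of_notMem_isCoatom (h2 : (2 : K) ≠ 0) (hB : B.IsSymm) {H : Submodule K V}
    (hH : IsCoatom H) (hBH : ∀ x ∈ H, ∀ y ∈ H, B x y = 0) {w w' : V} (hw : w ∉ H)
    (hww : B w w = 0) (hw' : w' ∉ H) (hww' : B w' w' = 0) : B w w' = 0 := by
  obtain ⟨a, h, hh, rfl⟩ : ∃ a : K, ∃ h ∈ H, w' = a • w + h := by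
    have hcompl := Submodule.isCompl_span_singleton_of_isCoatom_of_notMem hH hw
    obtain ⟨h, hh, _, hu, hw'⟩ :=
      Submodule.mem_sup.mp (hcompl.sup_eq_top.symm ▸ Submodule.mem_top : w' ∈ H ⊔ K ∙ w)
    obtain ⟨a, rfl⟩ := Submodule.mem_span_singleton.mp hu
    exact ⟨a, h, hh, by rw [← hw', add_comm]⟩
  have ha : a ≠ 0 := by
    rintro rfl
    exact hw' (by simpa using hh)
  have hwh : 2 * a * B w h = 0 := by
    simp only [map_add, map_smul, LinearMap.add_apply, LinearMap.smul_apply, smul_eq_mul, hww,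
      hBH h hh h hh, hB.eq h w] at hww'
    linear_combination hww'
  have hwh' : B w h = 0 := by simpa [h2, ha] using hwh
  simp [hww, hwh']

theorem eq_zero_of_isotropic_isCoatom (h2 : (2 : K) ≠ 0) (hB : B.IsSymm) {H : Submodule K V}
    (hH : IsCoatom H) (hBH : ∀ x ∈ H, ∀ y ∈ H, B x y = 0) {T : Set V} (hTH : ∀ w ∈ T, w ∉ H)
    (hT : ∀ w ∈ T, B w w = 0) (hspan : LinearMap.ker B ⊔ Submodule.span K T = ⊤) : B = 0 := by
  have hTker : T ⊆ LinearMap.ker B := fun w hw => by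
    have hker : LinearMap.ker B ⊔ Submodule.span K T ≤ LinearMap.ker (B w) := by
      refine sup_le (fun x hx => ?_) (Submodule.span_le.mpr fun w' hw' => ?_)
      · rw [LinearMap.mem_ker, hB.eq, LinearMap.mem_ker.mp hx, LinearMap.zero_apply]
      · exact apply_eq_zero_of_notMem_isCoatom h2 hB hH hBH (hTH w hw) (hT w hw) (hTH w' hw')
          (hT w' hw')
    rw [hspan, top_le_iff] at hker
    exact LinearMap.ker_eq_top.mp hker
  rwa [sup_eq_left.mpr (Submodule.span_le.mpr hTker), LinearMap.ker_eq_top] at hspan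

theorem exists_sum_smul_notMem (h2 : (2 : K) ≠ 0) {p : ι → V} {t : Finset ι} {M : Submodule K V}
    (h : ∃ i ∈ t, p i ∉ M) : ∃ α : ι → K, (∀ i, α i ≠ 0) ∧ ∑ i ∈ t, α i • p i ∉ M := by
  classical
  obtain ⟨i, hi, hpi⟩ := h
  by_cases hsum : ∑ j ∈ t, p j ∈ M
  · refine ⟨1 + Pi.single i 1, fun j => ?_, ?_⟩
    · rcases eq_or_ne j i with rfl | hj <;> simp [one_add_one_eq_two, *]
    · have hα : ∑ j ∈ t, (1 + Pi.single i 1 : ι → K) j • p j = ∑ j ∈ t, p j + p i := by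
        simp [add_smul, Finset.sum_add_distrib, Pi.single_apply, ite_smul, hi]
      rwa [hα, Submodule.add_mem_iff_right _ hsum]
  · exact ⟨1, fun _ => one_ne_zero, by simpa using hsum⟩

end Isotropic

section Weddle

variable {K V ι : Type*} [Field K] [AddCommGroup V] [Module K V]

/-- The quadratic cones with vertex `v` through all the points `p i`, as symmetric bilinear
forms. -/
def conesThrough (p : ι → V) (v : V) : Submodule K (LinearMap.BilinForm K V) where
  carrier := {B | B.IsSymm ∧ B v = 0 ∧ ∀ i, B (p i) (p i) = 0}
  zero_mem' := ⟨LinearMap.BilinForm.isSymm_zero, rfl, fun _ => rfl⟩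
  add_mem' hB hB' := ⟨hB.1.add hB'.1, by simp [hB.2.1, hB'.2.1],
    fun i => by simp [hB.2.2 i, hB'.2.2 i]⟩
  smul_mem' c _ hB := ⟨hB.1.smul c, by simp [hB.2.1], fun i => by simp [hB.2.2 i]⟩

variable (K) in
/-- The points `x` such that some quadric through all the `p i` is singular along the line `v x`.
Projecting from `v`, this is the cone over the Weddle locus of the projected points: the points
from which the projection of the `p i` to a plane lies on a conic. -/
def weddleLocus (p : ι → V) (v : V) : Set V :=
  {x | ∃ B ∈ conesThrough (K := K) p v, B ≠ 0 ∧ B x = 0}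

theorem generically_notMem_weddleLocus {σ : Type*} [Finite σ] {p : ι → σ → K} {v y : σ → K}
    (hy : y ∉ weddleLocus K p v) : Generically fun x => x ∉ weddleLocus K p v := by
  let φ : (σ → K) →ₗ[K] LinearMap.BilinForm K (σ → K) →ₗ[K] Module.Dual K (σ → K) :=
    LinearMap.applyₗ
  have hφ (x) : Disjoint (conesThrough p v) (LinearMap.ker (φ x)) ↔ x ∉ weddleLocus K p v := by
    rw [Submodule.disjoint_def]
    exact ⟨fun h ⟨B, hB, hB0, hBx⟩ => hB0 (h B hB hBx),
      fun h B hB hBx => of_not_not fun hB0 => h ⟨B, hB, hB0, hBx⟩⟩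
  simpa only [hφ] using generically_disjoint_ker (U := LinearMap.BilinForm K (σ → K)) φ
    ((hφ y).mpr hy)

theorem sum_smul_notMem_weddleLocus [DecidableEq ι] (h2 : (2 : K) ≠ 0) {p : ι → V} {s : Finset ι}
    {v : ι} (hH : IsCoatom (Submodule.span K (p '' s)))
    (hs : ∀ i ∉ s, p i ∉ Submodule.span K (p '' s)) (hcard : (s.erase v).card = 3)
    (hM : IsCoatom (Submodule.span K (p '' insert v (↑s)ᶜ))) {α : ι → K} (hα : ∀ i, α i ≠ 0)
    (hy : ∑ i ∈ s.erase v, α i • p i ∉ Submodule.span K (p '' insert v (↑s)ᶜ)) :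
    ∑ i ∈ s.erase v, α i • p i ∉ weddleLocus K p (p v) := by
  rintro ⟨B, ⟨hB, hBv, hBp⟩, hB0, hBy⟩
  refine hB0 ?_
  have hBt := apply_eq_zero_of_apply_sum_smul_eq_zero h2 hB hcard (fun i _ => hBp i) hα hBy
  have hBs : ∀ x ∈ p '' s, ∀ y ∈ p '' s, B x y = 0 := by
    rintro _ ⟨i, hi, rfl⟩ _ ⟨j, hj, rfl⟩
    by_cases hiv : i = v
    · rw [hiv, hBv, LinearMap.zero_apply]
    by_cases hjv : j = v
    · rw [hjv, hB.eq, hBv, LinearMap.zero_apply]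
    exact hBt i (Finset.mem_erase.mpr ⟨hiv, hi⟩) j (Finset.mem_erase.mpr ⟨hjv, hj⟩)
  refine eq_zero_of_isotropic_isCoatom h2 hB hH
    (fun x hx y hy => apply_eq_zero_of_mem_span hBs hx hy) (T := p '' (↑s)ᶜ)
    (by simpa using hs) (by simpa using fun i _ => hBp i) ?_
  refine hM.2 _ (lt_of_le_not_ge ?_ fun hle => hy (hle (Submodule.mem_sup_left hBy)))
  rw [Set.image_insert_eq, Submodule.span_insert]
  gcongr
  exact (Submodule.span_singleton_le_iff_mem _ _).mpr hBv

theorem exists_notMem_weddleLocus (h2 : (2 : K) ≠ 0) [Fintype ι] {p : ι → V}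
    (hι : Fintype.card ι = 7) (hV : Module.finrank K V = 5)
    (hspan : Submodule.span K (Set.range p) = ⊤)
    (hindep : ∀ s : Finset ι, s.card + 1 = Module.finrank K V → LinearIndepOn K p s) :
    ∃ v y, y ∉ weddleLocus K p (p v) := by
  classical
  have : FiniteDimensional K V := Module.finite_of_finrank_eq_succ hV
  obtain ⟨s, hcard, hs⟩ := exists_finset_forall_notMem_span_image (by lia) hspan hindep
  obtain ⟨v, hv⟩ : s.Nonempty := Finset.card_pos.mp (by lia)
  have hcard' : (insert v sᶜ).card + 1 = Module.finrank K V := by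
    rw [Finset.card_insert_of_notMem (by simpa using hv), Finset.card_compl]
    lia
  have hM := isCoatom_span_image_finset (hindep _ hcard') hcard'
  rw [Finset.coe_insert, Finset.coe_compl] at hM
  have hMt : ∃ i ∈ s.erase v, p i ∉ Submodule.span K (p '' insert v (↑s)ᶜ) := by
    by_contra! hall
    refine hM.1 (top_le_iff.mp (hspan ▸ Submodule.span_le.mpr ?_))
    rintro _ ⟨i, rfl⟩
    by_cases hi : i ∈ s.erase v
    · exact hall i hi
    · exact Submodule.subset_span (Set.mem_image_of_mem p (by simpa [or_iff_not_imp_left] using hi))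
  obtain ⟨α, hα, hy⟩ := exists_sum_smul_notMem h2 hMt
  refine ⟨v, _, sum_smul_notMem_weddleLocus h2 (isCoatom_span_image_finset (hindep s hcard) hcard)
    hs ?_ hM hα hy⟩
  rw [Finset.card_erase_of_mem hv]
  lia

end Weddle

section Pairs

variable {K V : Type*} [Field K] [AddCommGroup V] [Module K V]

theorem linearIndependent_rep_pair {P Q : Projectivization K V} (h : P ≠ Q) :
    LinearIndependent K ![P.rep, Q.rep] := by
  have hcomp : Projectivization.rep ∘ ![P, Q] = ![P.rep, Q.rep] :=
    (FinVec.map_eq Projectivization.rep ![P, Q]).symm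
  rwa [← hcomp, ← Projectivization.independent_iff, Projectivization.independent_pair_iff_ne]

theorem linearIndependent_map_pair {W : Type*} [AddCommGroup W] [Module K W] {M : V →ₗ[K] W}
    {x v w : V} (hker : LinearMap.ker M = Submodule.span K {x}) (hx : x ∉ Submodule.span K {v, w})
    (hvw : LinearIndependent K ![v, w]) : LinearIndependent K ![M v, M w] := by
  have hcomp : M ∘ ![v, w] = ![M v, M w] := (FinVec.map_eq M ![v, w]).symm
  rw [← hcomp]
  refine hvw.map ?_
  rw [hker, Matrix.range_cons_cons_empty]
  exact Submodule.disjoint_span_singleton_of_notMem hx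

end Pairs

section TwistedCubic

variable {K : Type*} [Field K]

/-- The standard parametrization `(s³ : s²t : st² : t³)` of the twisted cubic. -/
def twistedCubic (s t : K) : Fin 4 → K := ![s ^ 3, s ^ 2 * t, s * t ^ 2, t ^ 3]

variable (K) in
/-- The nonzero vectors representing the points of the standard twisted cubic. -/
def twistedCubicCone : Set (Fin 4 → K) :=
  {w | ∃ s t c : K, (s ≠ 0 ∨ t ≠ 0) ∧ c ≠ 0 ∧ w = c • twistedCubic s t}

theorem onTwistedCubic_iff {A : V4 ≃ₗ[ℂ] V4} {w : V4} :
    OnTwistedCubic A w ↔ w ∈ A '' twistedCubicCone ℂ := by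
  constructor
  · rintro ⟨s, t, c, hst, hc, rfl⟩
    exact ⟨_, ⟨s, t, c, hst, hc, rfl⟩, map_smul A c _⟩
  · rintro ⟨_, ⟨s, t, c, hst, hc, rfl⟩, rfl⟩
    exact ⟨s, t, c, hst, hc, map_smul A c _⟩

theorem twistedCubic_mul_mul (a s t : K) :
    twistedCubic (a * s) (a * t) = a ^ 3 • twistedCubic s t := by
  ext i
  fin_cases i <;> simp [twistedCubic] <;> ring

theorem mul_ne_mul_of_linearIndependent_twistedCubic {s t c s' t' c' : K}
    (h : LinearIndependent K ![c • twistedCubic s t, c' • twistedCubic s' t']) :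
    s * t' ≠ s' * t := by
  intro hcross
  have hne : c' • twistedCubic s' t' ≠ 0 := h.ne_zero 1
  obtain ⟨a, rfl, rfl⟩ : ∃ a, s = a * s' ∧ t = a * t' := by
    by_cases hs' : s' = 0
    · have ht' : t' ≠ 0 := fun ht' => hne (by simp [twistedCubic, hs', ht'])
      refine ⟨t / t', ?_, by field_simp⟩
      simpa [hs', ht'] using hcross
    · exact ⟨s / s', by field_simp, by rw [div_mul_eq_mul_div, eq_div_iff hs', hcross, mul_comm]⟩
  refine hne ?_
  have hdep := LinearIndependent.pair_iff.mp h c' (-(c * a ^ 3)) (by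
    rw [twistedCubic_mul_mul]
    module)
  rw [hdep.1, zero_smul]

theorem linearIndependent_twistedCubic {s t : Fin 4 → K}
    (hst : Pairwise fun i j => s i * t j ≠ s j * t i) :
    LinearIndependent K fun i => twistedCubic (s i) (t i) := by
  have hrow : (Matrix.projVandermonde t s).row = fun i => twistedCubic (s i) (t i) := by
    ext i j
    fin_cases j <;> simp [Matrix.projVandermonde_apply, twistedCubic, mul_comm, Fin.rev]
  rw [← hrow]
  refine Matrix.linearIndependent_rows_of_det_ne_zero (A := Matrix.projVandermonde t s) ?_
  rw [Matrix.det_projVandermonde]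
  refine Finset.prod_ne_zero_iff.mpr fun i _ => Finset.prod_ne_zero_iff.mpr fun j hj => ?_
  rw [sub_ne_zero, mul_comm (t j), mul_comm (t i)]
  exact hst (Finset.mem_Ioi.mp hj).ne

/-- The linear forms of the projection from the point `(s₀³ : s₀²t₀ : s₀t₀² : t₀³)` to the plane. -/
def projForm (s₀ t₀ : K) (i : Fin 3) : (Fin 4 → K) →ₗ[K] K :=
  t₀ • LinearMap.proj i.castSucc - s₀ • LinearMap.proj i.succ

/-- The quadratic cone over the twisted cubic with vertex `(s₀³ : s₀²t₀ : s₀t₀² : t₀³)`: it is the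
pullback along `projForm s₀ t₀` of the conic `X₀ X₂ = X₁²`. -/
def conicCone (s₀ t₀ : K) : LinearMap.BilinForm K (Fin 4 → K) :=
  let f := projForm s₀ t₀
  LinearMap.BilinForm.linMulLin (f 0) (f 2) + LinearMap.BilinForm.linMulLin (f 2) (f 0) -
    (2 : K) • LinearMap.BilinForm.linMulLin (f 1) (f 1)

theorem isSymm_conicCone (s₀ t₀ : K) : (conicCone s₀ t₀).IsSymm :=
  ⟨fun x y => by
    simp only [conicCone, LinearMap.sub_apply, LinearMap.add_apply, LinearMap.smul_apply,
      LinearMap.BilinForm.linMulLin_apply, smul_eq_mul]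
    ring⟩

theorem projForm_twistedCubic (s₀ t₀ s t : K) (i : Fin 3) :
    projForm s₀ t₀ i (twistedCubic s t) = (t₀ * s - s₀ * t) * ![s ^ 2, s * t, t ^ 2] i := by
  fin_cases i <;> simp [projForm, twistedCubic] <;> ring

theorem conicCone_vertex (s₀ t₀ : K) : conicCone s₀ t₀ (twistedCubic s₀ t₀) = 0 := by
  ext
  simp [conicCone, projForm_twistedCubic, mul_comm t₀]

theorem conicCone_twistedCubic (s₀ t₀ s t s' t' : K) :
    conicCone s₀ t₀ (twistedCubic s t) (twistedCubic s' t') =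
      (t₀ * s - s₀ * t) * (t₀ * s' - s₀ * t') * (s * t' - s' * t) ^ 2 := by
  simp only [conicCone, LinearMap.sub_apply, LinearMap.add_apply, LinearMap.smul_apply,
    LinearMap.BilinForm.linMulLin_apply, projForm_twistedCubic, Matrix.cons_val, smul_eq_mul]
  ring

end TwistedCubic

section Projection

variable {K V ι : Type*} [Field K] [AddCommGroup V] [Module K V] {p : ι → V} {s t c : ι → K}
  {M : V →ₗ[K] Fin 4 → K}

theorem linearIndepOn_of_map_eq_twistedCubic (hM : ∀ i, M (p i) = c i • twistedCubic (s i) (t i))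
    (hc : ∀ i, c i ≠ 0) (hst : Pairwise fun i j => s i * t j ≠ s j * t i) {S : Finset ι}
    (hS : S.card = 4) : LinearIndepOn K p S := by
  let e : Fin 4 ≃ S := (S.equivFinOfCardEq hS).symm
  have hν : LinearIndependent K fun i => twistedCubic (s (e i)) (t (e i)) :=
    linearIndependent_twistedCubic
      (hst.comp_of_injective (Subtype.val_injective.comp e.injective))
  have hMp : LinearIndependent K (M ∘ (fun i : S => p i) ∘ e) := by
    convert hν.units_smul fun i => Units.mk0 _ (hc (e i))
    ext1 i
    exact hM (e i)
  exact (linearIndependent_equiv e).mp hMp.of_comp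

theorem mem_weddleLocus_of_map_eq_twistedCubic
    (hM : ∀ i, M (p i) = c i • twistedCubic (s i) (t i)) (hc : ∀ i, c i ≠ 0)
    (hst : Pairwise fun i j => s i * t j ≠ s j * t i) {x : V} (hx : M x = 0) {i j k : ι}
    (hki : k ≠ i) (hkj : k ≠ j) (hij : i ≠ j) : x ∈ weddleLocus K p (p k) := by
  have hsub {a b : ι} (hab : a ≠ b) : t a * s b - s a * t b ≠ 0 := by
    rw [sub_ne_zero, mul_comm]
    exact (hst hab).symm
  refine ⟨(conicCone (s k) (t k)).comp M M, ⟨⟨fun y z => ?_⟩, ?_, fun l => ?_⟩, fun h0 => ?_, ?_⟩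
  · exact (isSymm_conicCone _ _).eq _ _
  · ext
    simp [hM, conicCone_vertex]
  · simp [hM, conicCone_twistedCubic]
  · have := LinearMap.congr_fun₂ h0 (p i) (p j)
    refine hst hij (sub_eq_zero.mp ?_)
    simpa [hM, conicCone_twistedCubic, hc, hsub hki, hsub hkj] using this
  · ext
    simp [hx]

theorem exists_map_eq_twistedCubic {x : V} (hker : LinearMap.ker M = Submodule.span K {x})
    (hp : Pairwise fun i j => LinearIndependent K ![p i, p j])
    (hx : ∀ i j, x ∉ Submodule.span K {p i, p j}) (hM : ∀ i, M (p i) ∈ twistedCubicCone K) :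
    ∃ s t c : ι → K, (∀ i, M (p i) = c i • twistedCubic (s i) (t i)) ∧ (∀ i, c i ≠ 0) ∧
      Pairwise fun i j => s i * t j ≠ s j * t i := by
  choose s t c _ hc hM using hM
  refine ⟨s, t, c, hM, hc, fun i j hij => ?_⟩
  have hind := linearIndependent_map_pair hker (hx i j) (hp hij)
  rw [hM, hM] at hind
  exact mul_ne_mul_of_linearIndependent_twistedCubic hind

end Projection

section GeneralProjection

variable {K ι : Type*} [Field K]

theorem generically_notMem_span_pair [Finite ι] {σ : Type*} [Fintype σ] (hσ : 2 < Fintype.card σ)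
    (p : ι → σ → K) : Generically fun x => ∀ i j, x ∉ Submodule.span K {p i, p j} := by
  classical
  refine Generically.forall fun i => Generically.forall fun j => generically_notMem fun htop => ?_
  have hle := (finrank_span_finset_le_card (R := K) {p i, p j}).trans Finset.card_le_two
  rw [Finset.coe_pair, Set.finrank, htop, finrank_top, Module.finrank_fintype_fun_eq_card] at hle
  lia

variable [Fintype ι]

theorem generically_not_forall_mem_twistedCubicCone (h2 : (2 : K) ≠ 0) (hι : Fintype.card ι = 7)
    {p : ι → Fin 5 → K} (hp : Pairwise fun i j => LinearIndependent K ![p i, p j])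
    (hspan : Submodule.span K (Set.range p) = ⊤) :
    Generically fun x => ∀ M : (Fin 5 → K) →ₗ[K] Fin 4 → K,
      LinearMap.ker M = Submodule.span K {x} → ¬ ∀ i, M (p i) ∈ twistedCubicCone K := by
  classical
  have hV : Module.finrank K (Fin 5 → K) = 5 := Module.finrank_fin_fun K
  have hsecant := generically_notMem_span_pair (by simp) p
  by_cases hindep : ∀ S : Finset ι, S.card + 1 = Module.finrank K (Fin 5 → K) → LinearIndepOn K p S
  · obtain ⟨k, y, hy⟩ := exists_notMem_weddleLocus h2 hι hV hspan hindep
    obtain ⟨i, hi, j, hj, hij⟩ : ∃ i ∈ Finset.univ.erase k, ∃ j ∈ Finset.univ.erase k, i ≠ j := by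
      rw [← Finset.one_lt_card, Finset.card_erase_of_mem (Finset.mem_univ k), Finset.card_univ, hι]
      norm_num
    refine (hsecant.and (generically_notMem_weddleLocus hy)).mono fun x ⟨hx, hxw⟩ M hker hM => ?_
    obtain ⟨s, t, c, hMp, hc, hst⟩ := exists_map_eq_twistedCubic hker hp hx hM
    have hMx : M x = 0 := by
      rw [← LinearMap.mem_ker, hker]
      exact Submodule.mem_span_singleton_self x
    exact hxw (mem_weddleLocus_of_map_eq_twistedCubic hMp hc hst hMx
      (Finset.ne_of_mem_erase hi).symm (Finset.ne_of_mem_erase hj).symm hij)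
  · refine hsecant.mono fun x hx M hker hM => hindep fun S hS => ?_
    obtain ⟨s, t, c, hMp, hc, hst⟩ := exists_map_eq_twistedCubic hker hp hx hM
    exact linearIndepOn_of_map_eq_twistedCubic hMp hc hst (by lia)

theorem stmt_8_general (h2 : (2 : K) ≠ 0) (hι : Fintype.card ι = 7)
    {Z : ι → Projectivization K (Fin 5 → K)} (hinj : Function.Injective Z)
    (hndg : Submodule.span K (Set.range fun i => (Z i).rep) = ⊤) :
    Generically fun x => ∀ L : (Fin 5 → K) →ₗ[K] Fin 4 → K,
      LinearMap.ker L = Submodule.span K {x} →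
        ¬ ∃ A : (Fin 4 → K) ≃ₗ[K] (Fin 4 → K), ∀ i, L (Z i).rep ∈ A '' twistedCubicCone K := by
  refine (generically_not_forall_mem_twistedCubicCone h2 hι
    (fun _ _ hij => linearIndependent_rep_pair (hinj.ne hij)) hndg).mono ?_
  rintro x hx L hker ⟨A, hA⟩
  refine hx (A.symm.toLinearMap ∘ₗ L) (by rw [LinearEquiv.ker_comp, hker]) fun i => ?_
  obtain ⟨w, hw, hAw⟩ := hA i
  simpa [← hAw] using hw

end GeneralProjection

/-- Let `Z = {P₁, …, P₇}` be a nondegenerate set of 7 points in ℙ⁴ (i.e. `Z` spans ℙ⁴).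
Then for a general point `x` of ℙ⁴ (all `x` in a nonempty Zariski-open set), the image
of `Z` under the projection from `x` to a hyperplane ℙ³ (realized by a surjective linear
map `L : ℂ⁵ → ℂ⁴` whose kernel is the line of `x`) is not contained in any twisted cubic
curve in ℙ³. -/
theorem stmt_8 (Z : Fin 7 → P4) (hinj : Function.Injective Z)
    (hndg : Submodule.span ℂ (Set.range fun i => (Z i).rep) = ⊤) :
    ∃ F : MvPolynomial (Fin 5) ℂ, F ≠ 0 ∧ (∃ n, F.IsHomogeneous n) ∧
      ∀ x : P4, MvPolynomial.eval x.rep F ≠ 0 →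
        ∀ L : V5 →ₗ[ℂ] V4, Function.Surjective L →
          LinearMap.ker L = Submodule.span ℂ {x.rep} →
          ¬ ∃ A : V4 ≃ₗ[ℂ] V4, ∀ i, OnTwistedCubic A (L ((Z i).rep)) := by
  obtain ⟨F, hF, hhom, hgen⟩ := stmt_8_general two_ne_zero (Fintype.card_fin 7) hinj hndg
  refine ⟨F, hF, hhom, fun x hx L _ hker => ?_⟩
  simpa only [onTwistedCubic_iff] using hgen x.rep hx L hker
end
end
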